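/- For all integers v, k, t, m with 0 ≤ t ≤ k ≤ v and m ≥ 1, the covering number satisfies C(mv, mk, t) ≤ C(v,k,t): replacing each element of the v-set by m distinct new elements in every block of a (v,k,t) covering yields an (mv,mk,t) covering of the same size. -/

import Mathlib

/-- A `(v,k,t)` covering design: a family of `k`-element subsets (blocks) of a
`v`-element set such that every `t`-element subset is contained in at least one block. -/
def IsCoverDesign (v k t : ℕ) (B : Finset (Finset (Fin v))) : Prop :=
  (∀ b ∈ B, b.card = k) ∧
  ∀ s : Finset (Fin v), s.card = t → ∃ b ∈ B, s ⊆ b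

/-- `coverNumber v k t` is `C(v,k,t)`, the minimum number of blocks in a
`(v,k,t)` covering design. -/
noncomputable def coverNumber (v k t : ℕ) : ℕ :=
  sInf {n : ℕ | ∃ B : Finset (Finset (Fin v)), IsCoverDesign v k t B ∧ B.card = n}

/-!
Pull an optimal covering back along an `m`-to-one map `f : Fin (m * v) → Fin v`. Preimages of blocks
have `m * k` elements, and since `f` does not increase cardinalities, the image of a `t`-set extends
to a `t`-set lying in some block, whose preimage then contains the original set.
-/

open Finset

theorem card_filter_mem_eq_mul_card {α β : Type*} [Fintype α] [DecidableEq β] {f : α → β}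
    {m : ℕ} (b : Finset β) (hf : ∀ y ∈ b, #{x | f x = y} = m) : #{x | f x ∈ b} = m * #b := by
  rw [← sum_card_fiberwise_eq_card_filter, sum_const_nat hf, mul_comm]

theorem card_fiber_modNat (m : ℕ) {n : ℕ} (y : Fin n) : #{x : Fin (m * n) | x.modNat = y} = m :=
  calc #{x : Fin (m * n) | x.modNat = y}
      = #((univ : Finset (Fin m)) ×ˢ {y}) := card_equiv finProdFinEquiv.symm (by simp [eq_comm])
    _ = m := by simp

section

variable {v k t : ℕ}

theorem isCoverDesign_powersetCard_univ (htk : t ≤ k) (hkv : k ≤ v) :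
    IsCoverDesign v k t (powersetCard k univ) := by
  refine ⟨fun b hb ↦ (mem_powersetCard.mp hb).2, fun s hs ↦ ?_⟩
  obtain ⟨b, hsb, hb⟩ := exists_superset_card_eq (hs.trans_le htk) (by simpa using hkv)
  exact ⟨b, mem_powersetCard_univ.mpr hb, hsb⟩

theorem exists_isCoverDesign_card_eq_coverNumber (htk : t ≤ k) (hkv : k ≤ v) :
    ∃ B, IsCoverDesign v k t B ∧ #B = coverNumber v k t :=
  Nat.sInf_mem (s := {n | ∃ B, IsCoverDesign v k t B ∧ #B = n})
    ⟨_, _, isCoverDesign_powersetCard_univ htk hkv, rfl⟩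

namespace IsCoverDesign

variable {B : Finset (Finset (Fin v))}

theorem coverNumber_le_card (hB : IsCoverDesign v k t B) : coverNumber v k t ≤ #B :=
  Nat.sInf_le ⟨B, hB, rfl⟩

theorem exists_superset_of_card_le (hB : IsCoverDesign v k t B) (htv : t ≤ v)
    {s : Finset (Fin v)} (hs : #s ≤ t) : ∃ b ∈ B, s ⊆ b := by
  obtain ⟨u, hsu, hu⟩ := exists_superset_card_eq hs (by simpa using htv)
  obtain ⟨b, hb, hub⟩ := hB.2 u hu
  exact ⟨b, hb, hsu.trans hub⟩

theorem image_preimage {w m : ℕ} {f : Fin w → Fin v} (hB : IsCoverDesign v k t B) (htv : t ≤ v)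
    (hf : ∀ y, #{x | f x = y} = m) :
    IsCoverDesign w (m * k) t (B.image fun b ↦ ({x | f x ∈ b} : Finset (Fin w))) := by
  refine ⟨forall_mem_image.mpr fun b hb ↦ ?_, fun s hs ↦ ?_⟩
  · rw [card_filter_mem_eq_mul_card b fun y _ ↦ hf y, hB.1 b hb]
  · have himage : #(s.image f) ≤ t := card_image_le.trans_eq hs
    obtain ⟨b, hb, hsb⟩ := hB.exists_superset_of_card_le htv himage
    exact ⟨_, mem_image_of_mem _ hb, fun x hx ↦ by simpa using hsb (mem_image_of_mem f hx)⟩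

end IsCoverDesign

end

/-- `C(mv,mk,t) ≤ C(v,k,t)`: replace each element of the `v`-set by `m` distinct new
elements in every block of a `(v,k,t)` covering. -/
theorem cover_multiply (v k t m : ℕ) (htk : t ≤ k) (hkv : k ≤ v) (hm : 1 ≤ m) :
    coverNumber (m * v) (m * k) t ≤ coverNumber v k t := by
  obtain ⟨B, hB, hcard⟩ := exists_isCoverDesign_card_eq_coverNumber htk hkv
  have hpull := hB.image_preimage (htk.trans hkv) (card_fiber_modNat m)
  calc coverNumber (m * v) (m * k) t
      ≤ #(B.image fun b ↦ ({x | x.modNat ∈ b} : Finset (Fin (m * v)))) := hpull.coverNumber_le_card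
    _ ≤ #B := card_image_le
    _ = coverNumber v k t := hcard
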